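/- Let ν > 0, Δt > 0, λ > 0, σ := √(λ² + 1/ν), C₁ := −ν⁻¹·sinh(σΔt)/(σ·cosh(σΔt) + λ·sinh(σΔt)), C₂ := σ/(σ·cosh(σΔt) + λ·sinh(σΔt)), and Φ := {C₂·cos(θ) + ε·i·√(C₂²·sin²(θ) + ν·C₁²) : θ ∈ [−π, π], ε ∈ {−1, +1}} ⊂ ℂ. Then Φ is an eigenvalue cluster for the sequence of matrices (T^PS_N)_{N≥2}: for every open set O ⊆ ℂ with Φ ⊆ O, the number of complex eigenvalues of T^PS_N (counted with multiplicity as roots of the characteristic polynomial) lying outside O, divided by N, tends to 0 as N → ∞. -/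

import Mathlib

noncomputable section

/-- σ := √(λ² + 1/ν). -/
def sig (ν lam : ℝ) : ℝ := Real.sqrt (lam ^ 2 + 1 / ν)

/-- C₁ := −ν⁻¹·sinh(σΔt)/(σ·cosh(σΔt) + λ·sinh(σΔt)). -/
def C1 (ν Δt lam : ℝ) : ℝ :=
  -(ν⁻¹ * Real.sinh (sig ν lam * Δt)) /
    (sig ν lam * Real.cosh (sig ν lam * Δt) + lam * Real.sinh (sig ν lam * Δt))

/-- C₂ := σ/(σ·cosh(σΔt) + λ·sinh(σΔt)). -/
def C2 (ν Δt lam : ℝ) : ℝ :=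
  sig ν lam /
    (sig ν lam * Real.cosh (sig ν lam * Δt) + lam * Real.sinh (sig ν lam * Δt))

/-- The block tridiagonal Toeplitz iteration matrix `T^PS_N` of size `2(N-1) × 2(N-1)`,
with diagonal blocks `T_d = [[0, C₁], [−ν C₁, 0]]`, superdiagonal blocks
`T_r = [[C₂, 0], [0, 0]]` and subdiagonal blocks `T_l = [[0, 0], [0, C₂]]`. -/
def TPS (ν Δt lam : ℝ) (N : ℕ) : Matrix (Fin (2 * (N - 1))) (Fin (2 * (N - 1))) ℝ :=
  fun i j =>
    if (i : ℕ) / 2 = (j : ℕ) / 2 then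
      -- diagonal block T_d
      if (i : ℕ) % 2 = 0 ∧ (j : ℕ) % 2 = 1 then C1 ν Δt lam
      else if (i : ℕ) % 2 = 1 ∧ (j : ℕ) % 2 = 0 then -ν * C1 ν Δt lam
      else 0
    else if (j : ℕ) / 2 = (i : ℕ) / 2 + 1 then
      -- superdiagonal block T_r
      if (i : ℕ) % 2 = 0 ∧ (j : ℕ) % 2 = 0 then C2 ν Δt lam else 0
    else if (i : ℕ) / 2 = (j : ℕ) / 2 + 1 then
      -- subdiagonal block T_l
      if (i : ℕ) % 2 = 1 ∧ (j : ℕ) % 2 = 1 then C2 ν Δt lam else 0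
    else 0


/-- The limit spectrum Φ: the two closed curves θ ↦ C₂ cos θ ± i √(C₂² sin²θ + ν C₁²). -/
def PhiSet (ν Δt lam : ℝ) : Set ℂ :=
  {z : ℂ | ∃ θ ∈ Set.Icc (-Real.pi) Real.pi, ∃ ε : ℝ, (ε = 1 ∨ ε = -1) ∧
    z = (C2 ν Δt lam * Real.cos θ : ℝ) + (ε : ℂ) * Complex.I *
          (Real.sqrt (C2 ν Δt lam ^ 2 * Real.sin θ ^ 2 + ν * C1 ν Δt lam ^ 2) : ℝ)}

/-!
After reordering the unknowns, `T^PS_N` is the block matrix `[[c S, a], [b, d Sᵀ]]` with `S` the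
nilpotent shift of size `n = N - 1`. Eliminating one half of an eigenvector leaves a three-term
recurrence, solved by powers of the two roots `p, q` of
`X² - (z² - ab + cd) X + z² cd`, and the boundary conditions become
`pⁿ (p - cd) = qⁿ (q - cd)`. Since `(p - cd) (q - cd) = ab · cd ≠ 0`, this equation fails for all
large `n` wherever `|q| < |p|`, uniformly on compact sets. As the eigenvalues stay bounded, they
can only accumulate where `|p| = |q|`; there `p + q = 2 z C₂ cos θ`, a quadratic equation for `z`
whose solutions form `Φ`. In particular an open neighbourhood of `Φ` eventually contains every
eigenvalue.
-/

open Filter Topology Polynomial Matrix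

lemma tendsto_card_filter_div_of_eventually_forall_not {ι : Type*} {P : ι → Prop}
    [DecidablePred P] {s : ℕ → Multiset ι} (h : ∀ᶠ n in atTop, ∀ x ∈ s n, ¬ P x) :
    Tendsto (fun n : ℕ ↦ (Multiset.card (Multiset.filter P (s n)) : ℝ) / n) atTop (𝓝 0) := by
  refine tendsto_const_nhds.congr' (h.mono fun n hn ↦ ?_)
  simp [Multiset.filter_eq_nil.2 hn]

section TwoRoots

lemma exists_add_eq_mul_eq {K : Type*} [Field K] [IsAlgClosed K] (s t : K) :
    ∃ p q : K, p + q = s ∧ p * q = t := by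
  have hdeg : (X ^ 2 - C s * X + C t : K[X]).degree = 2 := by compute_degree!
  obtain ⟨p, hp⟩ := IsAlgClosed.exists_root (X ^ 2 - C s * X + C t : K[X]) (by simp [hdeg])
  have hp : p ^ 2 - s * p + t = 0 := by simpa using hp
  exact ⟨p, s - p, by ring, by linear_combination -hp⟩

lemma norm_le_add_one_of_norm_add_le_of_norm_mul_le {K : Type*} [NormedField K] {p q : K} {M : ℝ}
    (hadd : ‖p + q‖ ≤ M) (hmul : ‖p * q‖ ≤ M) : ‖p‖ ≤ M + 1 := by
  have hM : 0 ≤ M := (norm_nonneg _).trans hadd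
  have hsq : ‖p‖ ^ 2 ≤ M * ‖p‖ + M := calc
    ‖p‖ ^ 2 = ‖(p + q) * p - p * q‖ := by rw [← norm_pow]; congr 1; ring
    _ ≤ ‖p + q‖ * ‖p‖ + ‖p * q‖ := (norm_sub_le _ _).trans_eq (by rw [norm_mul])
    _ ≤ M * ‖p‖ + M := by gcongr
  nlinarith [norm_nonneg p]

lemma isCompact_preimage_add_mul {K : Type*} [NormedField K] [ProperSpace K] {S : Set (K × K)}
    (hS : IsCompact S) : IsCompact ((fun x : K × K ↦ (x.1 + x.2, x.1 * x.2)) ⁻¹' S) := by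
  obtain ⟨M, hM⟩ := hS.isBounded.exists_norm_le
  refine Metric.isCompact_of_isClosed_isBounded (hS.isClosed.preimage (by fun_prop))
    (isBounded_iff_forall_norm_le.2 ⟨M + 1, fun x hx ↦ norm_prod_le_iff.2 ⟨?_, ?_⟩⟩)
  all_goals obtain ⟨hadd, hmul⟩ := norm_prod_le_iff.1 (hM _ hx)
  · exact norm_le_add_one_of_norm_add_le_of_norm_mul_le hadd hmul
  · dsimp only at hadd hmul
    rw [add_comm] at hadd
    rw [mul_comm] at hmul
    exact norm_le_add_one_of_norm_add_le_of_norm_mul_le hadd hmul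

lemma sub_mul_eq_of_second_order_recurrence {R : Type*} [CommRing R] {p q : R} {n : ℕ} {y : ℕ → R}
    (hy : ∀ k, k + 2 ≤ n → y (k + 2) = (p + q) * y (k + 1) - p * q * y k) :
    ∀ k ≤ n, (p - q) * y k = p ^ k * (y 1 - q * y 0) - q ^ k * (y 1 - p * y 0) := by
  intro k
  induction k using Nat.twoStepInduction with
  | zero => intro _; ring
  | one => intro _; ring
  | more k ih ih' =>
    intro hk
    rw [hy k hk]
    linear_combination (p + q) * ih' (by omega) - p * q * ih (by omega)

lemma eventually_forall_pow_mul_ne_of_isCompact {X K : Type*} [TopologicalSpace X] [NormedField K]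
    {S : Set X} (hS : IsCompact S) {p q g h : X → K} (hp : ContinuousOn p S)
    (hq : ContinuousOn q S) (hg : ContinuousOn g S) (hh : ContinuousOn h S)
    (hlt : ∀ x ∈ S, ‖q x‖ < ‖p x‖) (hg0 : ∀ x ∈ S, g x ≠ 0) :
    ∀ᶠ n : ℕ in atTop, ∀ x ∈ S, p x ^ n * g x ≠ q x ^ n * h x := by
  have hp0 : ∀ x ∈ S, p x ≠ 0 := fun x hx ↦ norm_pos_iff.1 ((norm_nonneg _).trans_lt (hlt x hx))
  obtain ⟨B, hB⟩ := hS.exists_bound_of_continuousOn (hh.div hg hg0)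
  obtain ⟨δ, hδ, hratio⟩ := hS.exists_forall_le' (a := 0)
    (continuousOn_const (c := (1 : ℝ)).sub (hq.div hp hp0).norm) fun x hx ↦ by
      rw [Pi.sub_apply, Pi.div_apply, norm_div, sub_pos, div_lt_one (norm_pos_iff.2 (hp0 x hx))]
      exact hlt x hx
  have hlim : Tendsto (fun n : ℕ ↦ max (1 - δ) 0 ^ n * B) atTop (𝓝 0) := by
    simpa using (tendsto_pow_atTop_nhds_zero_of_lt_one (le_max_right _ _)
      (max_lt (by linarith) one_pos)).mul_const B
  filter_upwards [hlim.eventually_lt_const one_pos] with n hn x hx heq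
  have hone : (q x / p x) ^ n * (h x / g x) = 1 := by
    rw [div_pow, div_mul_div_comm, ← heq,
      div_self (mul_ne_zero (pow_ne_zero n (hp0 x hx)) (hg0 x hx))]
  have hle : ‖q x / p x‖ ≤ max (1 - δ) 0 :=
    le_max_of_le_left (by simpa using le_sub_comm.1 (hratio x hx))
  refine hn.not_ge ?_
  calc 1 = ‖q x / p x‖ ^ n * ‖h x / g x‖ := by rw [← norm_pow, ← norm_mul, hone, norm_one]
    _ ≤ max (1 - δ) 0 ^ n * B := by gcongr; exact hB x hx

lemma exists_add_eq_two_mul_cos {p q r : ℂ} (hmul : p * q = r ^ 2) (hnorm : ‖p‖ = ‖q‖) :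
    ∃ θ ∈ Set.Icc (-Real.pi) Real.pi, p + q = 2 * r * Real.cos θ := by
  have hpr : ‖p‖ = ‖r‖ := by
    refine (pow_left_inj₀ (norm_nonneg _) (norm_nonneg _) two_ne_zero).1 ?_
    rw [← norm_pow r, ← hmul, norm_mul, ← hnorm, sq]
  rcases eq_or_ne r 0 with rfl | hr
  · have hp : p = 0 := by simpa using hpr
    have hq : q = 0 := by simpa [hp] using hnorm.symm
    exact ⟨0, ⟨by linarith [Real.pi_pos], Real.pi_pos.le⟩, by simp [hp, hq]⟩
  obtain ⟨θ, hθ, hexp⟩ := Complex.norm_eq_one_iff'.1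
    (show ‖p / r‖ = 1 by rw [norm_div, hpr, div_self (norm_ne_zero_iff.2 hr)])
  have hp : p = r * Complex.exp (θ * Complex.I) := by rw [hexp]; field_simp
  have hq : q = r * Complex.exp (-θ * Complex.I) := by
    have hp0 : p ≠ 0 := hp ▸ mul_ne_zero hr (Complex.exp_ne_zero _)
    apply mul_left_cancel₀ hp0
    rw [hmul, hp, mul_mul_mul_comm, ← Complex.exp_add]
    simp [sq]
  refine ⟨θ, Set.Ioc_subset_Icc_self hθ, ?_⟩
  rw [hp, hq, ← mul_add, ← Complex.two_cos, Complex.ofReal_cos]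
  ring

end TwoRoots

section Extend

variable {ι κ R : Type*} [Fintype ι] {f : ι → κ}

lemma sum_ite_eq_extend [AddCommMonoid R] [DecidableEq κ] (hf : f.Injective) (v : ι → R)
    (k : κ) : ∑ j, (if f j = k then v j else 0) = Function.extend f v 0 k := by
  by_cases hk : ∃ i, f i = k
  · obtain ⟨i, rfl⟩ := hk
    classical simp [hf.extend_apply, hf.eq_iff]
  · rw [Function.extend_apply' _ _ _ hk]
    exact Finset.sum_eq_zero fun j _ ↦ if_neg fun hj ↦ hk ⟨j, hj⟩

lemma norm_extend_zero_le [SeminormedAddCommGroup R] (hf : f.Injective) (v : ι → R) (k : κ) :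
    ‖Function.extend f v 0 k‖ ≤ ‖v‖ := by
  by_cases hk : ∃ i, f i = k
  · obtain ⟨i, rfl⟩ := hk
    exact hf.extend_apply v 0 i ▸ norm_le_pi_norm v i
  · simp [Function.extend_apply' _ _ _ hk]

end Extend

section ShiftBlock

/-- The `n × n` nilpotent shift matrix, with ones on the superdiagonal. -/
def shiftMatrix (R : Type*) [Zero R] [One R] (n : ℕ) : Matrix (Fin n) (Fin n) R :=
  .of fun i j ↦ if (j : ℕ) = i + 1 then 1 else 0

/-- The block matrix `[[c S, a], [b, d Sᵀ]]`, where `S` is the shift matrix of size `n`. It is the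
block tridiagonal Toeplitz matrix with diagonal blocks `[[0, a], [b, 0]]`, superdiagonal blocks
`[[c, 0], [0, 0]]` and subdiagonal blocks `[[0, 0], [0, d]]`, once the first components of all
blocks are listed before all the second ones. -/
def shiftBlock {R : Type*} [Semiring R] (a b c d : R) (n : ℕ) :
    Matrix (Fin n ⊕ Fin n) (Fin n ⊕ Fin n) R :=
  fromBlocks (c • shiftMatrix R n) (a • 1) (b • 1) (d • (shiftMatrix R n)ᵀ)

lemma val_add_one_injective (n : ℕ) : (fun i : Fin n ↦ (i : ℕ) + 1).Injective :=
  (add_left_injective 1).comp Fin.val_injective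

lemma shiftMatrix_mulVec {R : Type*} [Semiring R] {n : ℕ} (u : Fin n → R) (i : Fin n) :
    (shiftMatrix R n *ᵥ u) i = Function.extend Fin.val u 0 (i + 1) := by
  simp [mulVec, dotProduct, shiftMatrix, sum_ite_eq_extend Fin.val_injective]

lemma shiftMatrix_transpose_mulVec {R : Type*} [Semiring R] {n : ℕ} (w : Fin n → R)
    (i : Fin n) :
    ((shiftMatrix R n)ᵀ *ᵥ w) i = Function.extend (fun j : Fin n ↦ (j : ℕ) + 1) w 0 i := by
  simp [mulVec, dotProduct, shiftMatrix, ← sum_ite_eq_extend (val_add_one_injective n), eq_comm]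

section Semiring

variable {R : Type*} [Semiring R] {a b c d : R} {n : ℕ} (v : Fin n ⊕ Fin n → R) (i : Fin n)

lemma shiftBlock_mulVec_inl : (shiftBlock a b c d n *ᵥ v) (.inl i) =
    c * Function.extend Fin.val (v ∘ .inl) 0 (i + 1) + a * v (.inr i) := by
  simp [shiftBlock, fromBlocks_mulVec, smul_mulVec, shiftMatrix_mulVec]

lemma shiftBlock_mulVec_inr : (shiftBlock a b c d n *ᵥ v) (.inr i) =
    b * v (.inl i) + d * Function.extend (fun j : Fin n ↦ (j : ℕ) + 1) (v ∘ .inr) 0 i := by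
  simp [shiftBlock, fromBlocks_mulVec, smul_mulVec, shiftMatrix_transpose_mulVec]

end Semiring

/-- The sequences `u`, `w` are the two halves of an eigenvector of `shiftBlock a b c d n` for `z`,
extended by zero. The index of `w` is raised by one, so that both boundary rows of the matrix take
the same form as the others. -/
structure IsShiftBlockEigenvector {R : Type*} [Semiring R] (a b c d z : R) (n : ℕ)
    (u w : ℕ → R) : Prop where
  right_boundary : u n = 0
  left_boundary : w 0 = 0
  row_inl : ∀ k < n, c * u (k + 1) + a * w (k + 1) = z * u k
  row_inr : ∀ k < n, b * u k + d * w k = z * w (k + 1)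
  ne_zero : ∃ k < n, u k ≠ 0 ∨ w (k + 1) ≠ 0

variable {K : Type*}

lemma exists_mulVec_eq_smul_of_mem_spectrum {m : Type*} [Fintype m] [DecidableEq m] [Field K]
    {A : Matrix m m K} {z : K} (hz : z ∈ spectrum K A) : ∃ v ≠ 0, A *ᵥ v = z • v := by
  rw [← spectrum_toLin', ← Module.End.hasEigenvalue_iff_mem_spectrum] at hz
  obtain ⟨v, hv⟩ := hz.exists_hasEigenvector
  exact ⟨v, hv.2, by simpa using hv.apply_eq_smul⟩

lemma norm_le_of_mem_spectrum_shiftBlock [NormedField K] {a b c d z : K} {n : ℕ}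
    (hz : z ∈ spectrum K (shiftBlock a b c d n)) : ‖z‖ ≤ ‖a‖ + ‖b‖ + ‖c‖ + ‖d‖ := by
  obtain ⟨v, hv0, hv⟩ := exists_mulVec_eq_smul_of_mem_spectrum hz
  have hinl : ‖v ∘ Sum.inl‖ ≤ ‖v‖ :=
    (pi_norm_le_iff_of_nonneg (norm_nonneg v)).2 fun i ↦ norm_le_pi_norm v (.inl i)
  have hinr : ‖v ∘ Sum.inr‖ ≤ ‖v‖ :=
    (pi_norm_le_iff_of_nonneg (norm_nonneg v)).2 fun i ↦ norm_le_pi_norm v (.inr i)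
  refine le_of_mul_le_mul_right ?_ (norm_pos_iff.2 hv0)
  rw [← norm_smul, ← hv, pi_norm_le_iff_of_nonneg (by positivity)]
  rintro (i | i)
  · calc ‖(shiftBlock a b c d n *ᵥ v) (.inl i)‖
        ≤ ‖c‖ * ‖v‖ + ‖a‖ * ‖v‖ := by
          rw [shiftBlock_mulVec_inl]
          refine norm_add_le_of_le (norm_mul_le_of_le le_rfl ?_) (norm_mul_le_of_le le_rfl ?_)
          · exact (norm_extend_zero_le Fin.val_injective _ _).trans hinl
          · exact norm_le_pi_norm v _
      _ ≤ (‖a‖ + ‖b‖ + ‖c‖ + ‖d‖) * ‖v‖ := by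
        rw [← add_mul]
        refine mul_le_mul_of_nonneg_right ?_ (norm_nonneg v)
        linarith [norm_nonneg b, norm_nonneg d]
  · calc ‖(shiftBlock a b c d n *ᵥ v) (.inr i)‖
        ≤ ‖b‖ * ‖v‖ + ‖d‖ * ‖v‖ := by
          rw [shiftBlock_mulVec_inr]
          refine norm_add_le_of_le (norm_mul_le_of_le le_rfl ?_) (norm_mul_le_of_le le_rfl ?_)
          · exact norm_le_pi_norm v _
          · exact (norm_extend_zero_le (val_add_one_injective n) _ _).trans hinr
      _ ≤ (‖a‖ + ‖b‖ + ‖c‖ + ‖d‖) * ‖v‖ := by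
        rw [← add_mul]
        refine mul_le_mul_of_nonneg_right ?_ (norm_nonneg v)
        linarith [norm_nonneg a, norm_nonneg c]

variable [Field K] {a b c d z : K} {n : ℕ}

lemma exists_isShiftBlockEigenvector_of_mem_spectrum
    (hz : z ∈ spectrum K (shiftBlock a b c d n)) :
    ∃ u w, IsShiftBlockEigenvector a b c d z n u w := by
  obtain ⟨v, hv0, hv⟩ := exists_mulVec_eq_smul_of_mem_spectrum hz
  let u : ℕ → K := Function.extend Fin.val (v ∘ .inl) 0
  let w : ℕ → K := Function.extend (fun j : Fin n ↦ (j : ℕ) + 1) (v ∘ .inr) 0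
  have hu (i : Fin n) : u i = v (.inl i) := Fin.val_injective.extend_apply _ _ i
  have hw (i : Fin n) : w (i + 1) = v (.inr i) := (val_add_one_injective n).extend_apply _ _ i
  refine ⟨u, w, ?_, ?_, fun k hk ↦ ?_, fun k hk ↦ ?_, ?_⟩
  · exact Function.extend_apply' _ _ _ fun ⟨i, hi⟩ ↦ i.2.ne hi
  · exact Function.extend_apply' _ _ _ fun ⟨i, hi⟩ ↦ Nat.succ_ne_zero _ hi
  · have hrow := congrFun hv (.inl ⟨k, hk⟩)
    rwa [shiftBlock_mulVec_inl, Pi.smul_apply, smul_eq_mul, ← hu, ← hw] at hrow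
  · have hrow := congrFun hv (.inr ⟨k, hk⟩)
    rwa [shiftBlock_mulVec_inr, Pi.smul_apply, smul_eq_mul, ← hu, ← hw] at hrow
  · obtain ⟨i | i, hi⟩ := Function.ne_iff.1 hv0
    · exact ⟨i, i.2, .inl (hu i ▸ hi)⟩
    · exact ⟨i, i.2, .inr (hw i ▸ hi)⟩

namespace IsShiftBlockEigenvector

variable {u w : ℕ → K}

lemma mul_eq_mul_of_eigenvalue_zero (h : IsShiftBlockEigenvector a b c d 0 n u w) (ha : a ≠ 0)
    (hb : b ≠ 0) : a * b = c * d := by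
  obtain ⟨k, hk, huk | hwk⟩ := h.ne_zero
  · have hinr := h.row_inr k hk
    rcases k with _ | k
    · simp [h.left_boundary, hb, huk] at hinr
    · have hinl := h.row_inl k (by omega)
      apply mul_right_cancel₀ huk
      linear_combination a * hinr - d * hinl
  · have hinl := h.row_inl k hk
    rcases (Nat.succ_le_of_lt hk).lt_or_eq with hk' | rfl
    · apply mul_right_cancel₀ hwk
      linear_combination b * hinl - c * h.row_inr (k + 1) hk'
    · simp [h.right_boundary, ha, hwk] at hinl

lemma apply_zero_ne_zero (h : IsShiftBlockEigenvector a b c d z n u w) (hc : c ≠ 0)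
    (hz : z ≠ 0) : u 0 ≠ 0 := by
  intro hu0
  have hvanish : ∀ k ≤ n, u k = 0 ∧ w k = 0 := by
    intro k
    induction k with
    | zero => exact fun _ ↦ ⟨hu0, h.left_boundary⟩
    | succ k ih =>
      intro hk
      obtain ⟨huk, hwk⟩ := ih (by omega)
      have hw : w (k + 1) = 0 := by simpa [huk, hwk, hz] using (h.row_inr k hk).symm
      exact ⟨by simpa [huk, hw, hc] using h.row_inl k hk, hw⟩
  obtain ⟨k, hk, huk | hwk⟩ := h.ne_zero
  · exact huk (hvanish k hk.le).1
  · exact hwk (hvanish (k + 1) hk).2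

lemma recurrence_zero (h : IsShiftBlockEigenvector a b c d z n u w) (hn : 0 < n) :
    z * c * u 1 = (z ^ 2 - a * b) * u 0 := by
  have hinr := h.row_inr 0 hn
  rw [h.left_boundary] at hinr
  linear_combination z * h.row_inl 0 hn + a * hinr

lemma recurrence (h : IsShiftBlockEigenvector a b c d z n u w) {k : ℕ} (hk : k + 1 < n) :
    z * c * u (k + 2) = (z ^ 2 - a * b + c * d) * u (k + 1) - z * d * u k := by
  linear_combination z * h.row_inl (k + 1) hk + a * h.row_inr (k + 1) hk
    - d * h.row_inl k (by omega)

lemma pow_mul_eq (h : IsShiftBlockEigenvector a b c d z n u w) (hc : c ≠ 0) (hz : z ≠ 0)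
    {p q : K} (hadd : p + q = z ^ 2 - a * b + c * d) (hmul : p * q = z ^ 2 * (c * d)) :
    p ^ n * (p - c * d) = q ^ n * (q - c * d) := by
  obtain ⟨k, hk, -⟩ := h.ne_zero
  have hbinet := sub_mul_eq_of_second_order_recurrence (p := p) (q := q)
    (y := fun k ↦ (z * c) ^ k * u k)
    (fun k hk ↦ by
      rw [hadd, hmul]
      linear_combination (z * c) ^ (k + 1) * h.recurrence hk) n le_rfl
  have hu1 : (z * c) ^ 1 * u 1 = (p + q - c * d) * u 0 := by
    rw [hadd, pow_one, h.recurrence_zero (by omega)]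
    ring
  rw [hu1, h.right_boundary] at hbinet
  apply mul_right_cancel₀ (h.apply_zero_ne_zero hc hz)
  linear_combination -hbinet

end IsShiftBlockEigenvector

end ShiftBlock

section LimitSpectrum

/-- The points `z` at which the two roots of `X² - (z² - α + β) X + z² β` have equal modulus. For
`α = ab` and `β = cd` the eigenvalues of `shiftBlock a b c d n` accumulate only here as
`n → ∞`. -/
def equimodularSet (α β : ℂ) : Set ℂ :=
  {z | ∃ p q : ℂ, p + q = z ^ 2 - α + β ∧ p * q = z ^ 2 * β ∧ ‖p‖ = ‖q‖}

lemma zero_mem_equimodularSet_self (α : ℂ) : 0 ∈ equimodularSet α α := ⟨0, 0, by simp⟩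

lemma eventually_forall_pow_mul_ne_of_disjoint_equimodularSet {α β : ℂ} (hα : α ≠ 0)
    (hβ : β ≠ 0) {Z : Set ℂ} (hZ : IsCompact Z) (hdisj : Disjoint Z (equimodularSet α β)) :
    ∀ᶠ n : ℕ in atTop, ∀ z ∈ Z, ∀ p q : ℂ, p + q = z ^ 2 - α + β → p * q = z ^ 2 * β →
      p ^ n * (p - β) ≠ q ^ n * (q - β) := by
  let coeffs (z : ℂ) : ℂ × ℂ := (z ^ 2 - α + β, z ^ 2 * β)
  let S : Set (ℂ × ℂ) :=
    (fun x ↦ (x.1 + x.2, x.1 * x.2)) ⁻¹' (coeffs '' Z) ∩ {x | ‖x.2‖ ≤ ‖x.1‖}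
  have hS : IsCompact S :=
    (isCompact_preimage_add_mul (hZ.image (by fun_prop))).inter_right
      (isClosed_le (by fun_prop) (by fun_prop))
  have hlt : ∀ x ∈ S, ‖x.2‖ < ‖x.1‖ := by
    rintro ⟨p, q⟩ ⟨⟨z, hz, hcoeffs⟩, hle⟩
    obtain ⟨hadd, hmul⟩ := Prod.ext_iff.1 hcoeffs
    exact hle.lt_of_ne fun heq ↦
      hdisj.notMem_of_mem_left hz ⟨p, q, hadd.symm, hmul.symm, heq.symm⟩
  have hne : ∀ x ∈ S, x.1 - β ≠ 0 := by
    rintro ⟨p, q⟩ ⟨⟨z, -, hcoeffs⟩, -⟩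
    obtain ⟨hadd, hmul⟩ := Prod.ext_iff.1 hcoeffs
    have hprod : (p - β) * (q - β) = α * β := by
      linear_combination β * hadd - hmul
    exact left_ne_zero_of_mul (hprod ▸ mul_ne_zero hα hβ)
  filter_upwards [eventually_forall_pow_mul_ne_of_isCompact hS (p := Prod.fst) (q := Prod.snd)
    (g := fun x ↦ x.1 - β) (h := fun x ↦ x.2 - β) (by fun_prop) (by fun_prop) (by fun_prop)
    (by fun_prop) hlt hne] with n hn z hz p q hadd hmul
  rcases le_total ‖q‖ ‖p‖ with hle | hle
  · exact hn (p, q) ⟨⟨z, hz, Prod.ext hadd.symm hmul.symm⟩, hle⟩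
  · rw [add_comm] at hadd
    rw [mul_comm] at hmul
    exact (hn (q, p) ⟨⟨z, hz, Prod.ext hadd.symm hmul.symm⟩, hle⟩).symm

theorem eventually_spectrum_shiftBlock_subset {a b c d : ℂ} (ha : a ≠ 0) (hb : b ≠ 0)
    (hc : c ≠ 0) (hd : d ≠ 0) {O : Set ℂ} (hO : IsOpen O)
    (hsub : equimodularSet (a * b) (c * d) ⊆ O) :
    ∀ᶠ n : ℕ in atTop, spectrum ℂ (shiftBlock a b c d n) ⊆ O := by
  have hZ : IsCompact (Metric.closedBall 0 (‖a‖ + ‖b‖ + ‖c‖ + ‖d‖) ∩ Oᶜ) :=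
    (isCompact_closedBall _ _).inter_right hO.isClosed_compl
  filter_upwards [eventually_forall_pow_mul_ne_of_disjoint_equimodularSet (mul_ne_zero ha hb)
    (mul_ne_zero hc hd) hZ (Set.disjoint_left.2 fun z hz hz' ↦ hz.2 (hsub hz'))] with n hn z hz
  by_contra hzO
  obtain ⟨u, w, huw⟩ := exists_isShiftBlockEigenvector_of_mem_spectrum hz
  have hz0 : z ≠ 0 := by
    rintro rfl
    have hab := huw.mul_eq_mul_of_eigenvalue_zero ha hb
    exact hzO (hsub (hab ▸ zero_mem_equimodularSet_self _))
  obtain ⟨p, q, hadd, hmul⟩ := exists_add_eq_mul_eq (z ^ 2 - a * b + c * d) (z ^ 2 * (c * d))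
  exact hn z ⟨by simpa using norm_le_of_mem_spectrum_shiftBlock hz, hzO⟩ p q hadd hmul
    (huw.pow_mul_eq hc hz0 hadd hmul)

lemma exists_eq_cos_add_sqrt_of_mem_equimodularSet {A c : ℝ} (hA : 0 ≤ A) {z : ℂ}
    (hz : z ∈ equimodularSet (-A) (c ^ 2)) :
    ∃ θ ∈ Set.Icc (-Real.pi) Real.pi, ∃ ε : ℝ, (ε = 1 ∨ ε = -1) ∧
      z = (c * Real.cos θ : ℝ) +
        (ε : ℂ) * Complex.I * (Real.sqrt (c ^ 2 * Real.sin θ ^ 2 + A) : ℝ) := by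
  obtain ⟨p, q, hadd, hmul, hnorm⟩ := hz
  obtain ⟨θ, hθ, hcos⟩ := exists_add_eq_two_mul_cos (r := z * c) (by rw [hmul]; ring) hnorm
  refine ⟨θ, hθ, ?_⟩
  set s : ℝ := Real.sqrt (c ^ 2 * Real.sin θ ^ 2 + A)
  have hs : (s : ℂ) ^ 2 = c ^ 2 * Real.sin θ ^ 2 + A := by
    exact_mod_cast Real.sq_sqrt (by positivity)
  have htrig : (Real.sin θ : ℂ) ^ 2 + Real.cos θ ^ 2 = 1 := by
    exact_mod_cast Real.sin_sq_add_cos_sq θ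
  have hsq : (z - c * Real.cos θ) ^ 2 = (Complex.I * s) ^ 2 := by
    rw [mul_pow, Complex.I_sq, hs]
    linear_combination hcos - hadd + c ^ 2 * htrig
  rcases sq_eq_sq_iff_eq_or_eq_neg.1 hsq with h | h
  · refine ⟨1, .inl rfl, ?_⟩
    rw [Complex.ofReal_mul]
    push_cast [-Complex.ofReal_cos]
    linear_combination h
  · refine ⟨-1, .inr rfl, ?_⟩
    rw [Complex.ofReal_mul]
    push_cast [-Complex.ofReal_cos]
    linear_combination h

end LimitSpectrum

section IterationMatrix

variable {ν Δt : ℝ} (lam : ℝ)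

lemma abs_lt_sig (hν : 0 < ν) : |lam| < sig ν lam := by
  rw [sig, ← Real.sqrt_sq_eq_abs]
  exact Real.sqrt_lt_sqrt (sq_nonneg _) (by simpa using hν)

lemma abs_sinh_lt_cosh (x : ℝ) : |Real.sinh x| < Real.cosh x := by
  rw [Real.abs_sinh, ← Real.cosh_abs]
  exact Real.sinh_lt_cosh _

lemma sig_mul_cosh_add_mul_sinh_pos (hν : 0 < ν) (x : ℝ) :
    0 < sig ν lam * Real.cosh x + lam * Real.sinh x := by
  have hlt : |lam * Real.sinh x| < sig ν lam * Real.cosh x := by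
    rw [abs_mul]
    exact mul_lt_mul'' (abs_lt_sig lam hν) (abs_sinh_lt_cosh x) (abs_nonneg _) (abs_nonneg _)
  linarith [neg_abs_le (lam * Real.sinh x)]

lemma sig_pos (hν : 0 < ν) : 0 < sig ν lam := (abs_nonneg lam).trans_lt (abs_lt_sig lam hν)

lemma C1_ne_zero (hν : 0 < ν) (hΔt : Δt ≠ 0) : C1 ν Δt lam ≠ 0 := by
  have hsinh : Real.sinh (sig ν lam * Δt) ≠ 0 :=
    Real.sinh_ne_zero.2 (mul_ne_zero (sig_pos lam hν).ne' hΔt)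
  exact div_ne_zero (neg_ne_zero.2 (mul_ne_zero (inv_ne_zero hν.ne') hsinh))
    (sig_mul_cosh_add_mul_sinh_pos lam hν _).ne'

lemma C2_ne_zero (hν : 0 < ν) : C2 ν Δt lam ≠ 0 :=
  div_ne_zero (sig_pos lam hν).ne' (sig_mul_cosh_add_mul_sinh_pos lam hν _).ne'

lemma equimodularSet_subset_PhiSet (hν : 0 ≤ ν) :
    equimodularSet (C1 ν Δt lam * (-ν * C1 ν Δt lam)) (C2 ν Δt lam * C2 ν Δt lam) ⊆
      PhiSet ν Δt lam := fun z hz ↦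
  exists_eq_cos_add_sqrt_of_mem_equimodularSet (A := ν * C1 ν Δt lam ^ 2) (by positivity) <| by
    convert hz using 2 <;> push_cast <;> ring

/-- The bijection that interleaves two copies of `Fin n` into the even and the odd elements of
`Fin (2 * n)`. -/
def interleave (n : ℕ) : Fin n ⊕ Fin n ≃ Fin (2 * n) where
  toFun := Sum.elim (fun i ↦ ⟨2 * i, by omega⟩) (fun i ↦ ⟨2 * i + 1, by omega⟩)
  invFun i := if (i : ℕ) % 2 = 0 then .inl ⟨i / 2, by omega⟩ else .inr ⟨i / 2, by omega⟩
  left_inv := by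
    rintro (i | i)
    · simp
    · simp [Nat.add_mod, show (2 * (i : ℕ) + 1) / 2 = i by omega]
  right_inv i := by
    rcases Nat.mod_two_eq_zero_or_one i with h | h <;> ext <;> simp [h] <;> omega

lemma TPS_map_ofReal_eq_reindex (ν Δt : ℝ) (N : ℕ) :
    (TPS ν Δt lam N).map (fun x ↦ (x : ℂ)) =
      reindex (interleave (N - 1)) (interleave (N - 1))
        (shiftBlock (C1 ν Δt lam : ℂ) (-ν * C1 ν Δt lam) (C2 ν Δt lam) (C2 ν Δt lam) (N - 1)) := by
  have hdiv (k : ℕ) : (2 * k + 1) / 2 = k := by omega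
  have hmod (k : ℕ) : (2 * k + 1) % 2 = 1 := by omega
  rw [← Equiv.symm_apply_eq]
  ext (i | i) (j | j)
  case inl.inr | inr.inl =>
    by_cases hij : i = j <;>
      simp [TPS, shiftBlock, interleave, hdiv, hmod, hij, Fin.val_inj]
  case inl.inl =>
    by_cases hij : (j : ℕ) = i + 1 <;>
      simp [TPS, shiftBlock, shiftMatrix, interleave, hij]
  case inr.inr =>
    by_cases hij : (i : ℕ) = j + 1 <;>
      simp [TPS, shiftBlock, shiftMatrix, interleave, hdiv, hmod, hij, add_assoc]

end IterationMatrix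

theorem PhiSet_eigenvalue_cluster_general {ν Δt : ℝ} (lam : ℝ) (hν : 0 < ν) (hΔt : Δt ≠ 0)
    {O : Set ℂ} (hO : IsOpen O) (hΦ : PhiSet ν Δt lam ⊆ O) :
    ∀ᶠ N : ℕ in atTop, ∀ z ∈ ((TPS ν Δt lam N).map (fun x ↦ (x : ℂ))).charpoly.roots, z ∈ O := by
  have hC1 : (C1 ν Δt lam : ℂ) ≠ 0 := mod_cast C1_ne_zero lam hν hΔt
  have hC2 : (C2 ν Δt lam : ℂ) ≠ 0 := mod_cast C2_ne_zero lam hν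
  have hνC1 : -ν * C1 ν Δt lam ≠ (0 : ℂ) := mul_ne_zero (mod_cast (neg_ne_zero.2 hν.ne')) hC1
  have hsub := eventually_spectrum_shiftBlock_subset hC1 hνC1 hC2 hC2 hO
    ((equimodularSet_subset_PhiSet lam hν.le).trans hΦ)
  filter_upwards [(tendsto_sub_atTop_nat 1).eventually hsub] with N hN z hz
  rw [TPS_map_ofReal_eq_reindex, charpoly_reindex] at hz
  exact hN (mem_spectrum_of_isRoot_charpoly (isRoot_of_mem_roots hz))

open scoped Classical in
/-- Φ is an eigenvalue cluster for the sequence (T^PS_N): for every open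
set O containing Φ, the number of eigenvalues of T^PS_N (with multiplicity) lying
outside O is o(N) as N → ∞. -/
theorem PhiSet_eigenvalue_cluster (ν Δt lam : ℝ)
    (hν : 0 < ν) (hΔt : 0 < Δt) (hlam : 0 < lam) :
    ∀ O : Set ℂ, IsOpen O → PhiSet ν Δt lam ⊆ O →
      Filter.Tendsto
        (fun N : ℕ =>
          (Multiset.card
              (Multiset.filter (fun z => z ∉ O)
                (((TPS ν Δt lam N).map (fun x => (x : ℂ))).charpoly.roots)) : ℝ) / N)
        Filter.atTop (nhds 0) := by
  exact fun O hO hΦ ↦ tendsto_card_filter_div_of_eventually_forall_not <|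
    (PhiSet_eigenvalue_cluster_general lam hν hΔt.ne' hO hΦ).mono fun _ hN z hz ↦
      not_not.2 (hN z hz)
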